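/- arXiv:1008.4627 — 4 statements merged into one kernel-verified Lean document; each statement's English description precedes it below -/
import Mathlib

section
/- If a connected component of the similarity graph G_D contains two adjacent vertices (s,a) and (t,b) with D s a ≠ D t b, then every vertex (u,c) belonging to that connected component is modifiable in D. -/
/-- A matching dependency: a finite set `L` of attribute pairs (the similarity
condition to the left of the arrow) and a finite set `R` of attribute pairs
(the pairs of attributes to be matched, to the right of the arrow). -/
structure MD (A : Type*) where
  L : Finset (A × A)
  R : Finset (A × A)

/-- `simPairs sim L D t₁ t₂` : the tuples `t₁, t₂` of instance `D` satisfy the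
similarity condition given by the attribute pairs in `L`. -/
def simPairs {T A U : Type*} (sim : A → A → U → U → Prop)
    (L : Finset (A × A)) (D : T → A → U) (t₁ t₂ : T) : Prop :=
  ∀ p ∈ L, sim p.1 p.2 (D t₁ p.1) (D t₂ p.2)

/-- `Modifiable sim M D t c` : the value of attribute `c` of tuple `t` is
modifiable in instance `D` with respect to the set `M` of MDs (least such predicate). -/
inductive Modifiable {T A U : Type*} (sim : A → A → U → U → Prop)
    (M : Finset (MD A)) (D : T → A → U) : T → A → Prop where
  | left_ne {m : MD A} {t s : T} {c e : A} :
      m ∈ M → (c, e) ∈ m.R → simPairs sim m.L D t s →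
      D t c ≠ D s e → Modifiable sim M D t c
  | left_mod {m : MD A} {t s : T} {c e : A} :
      m ∈ M → (c, e) ∈ m.R → simPairs sim m.L D t s →
      Modifiable sim M D s e → Modifiable sim M D t c
  | right_ne {m : MD A} {t s : T} {c e : A} :
      m ∈ M → (e, c) ∈ m.R → simPairs sim m.L D s t →
      D s e ≠ D t c → Modifiable sim M D t c
  | right_mod {m : MD A} {t s : T} {c e : A} :
      m ∈ M → (e, c) ∈ m.R → simPairs sim m.L D s t →
      Modifiable sim M D s e → Modifiable sim M D t c

/-- `(D, D') ⊨ M`. -/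
def Sat {T A U : Type*} (sim : A → A → U → U → Prop)
    (M : Finset (MD A)) (D D' : T → A → U) : Prop :=
  (∀ m ∈ M, ∀ t₁ t₂ : T, simPairs sim m.L D t₁ t₂ →
      ∀ p ∈ m.R, D' t₁ p.1 = D' t₂ p.2) ∧
  (∀ (t : T) (g : A), ¬ Modifiable sim M D t g → D' t g = D t g)

/-- `D'` is a resolved instance of `D` wrt `M`: there is a finite (possibly empty)
chain of instances `D₁, …, Dₙ` with `(D,D₁) ⊨ M`, `(Dᵢ,Dᵢ₊₁) ⊨ M`, `(Dₙ,D') ⊨ M`,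
and `(D',D') ⊨ M`. -/
def ResolvedInstance {T A U : Type*} (sim : A → A → U → U → Prop)
    (M : Finset (MD A)) (D D' : T → A → U) : Prop :=
  ∃ L : List (T → A → U), List.Chain (Sat sim M) D (L ++ [D']) ∧ Sat sim M D' D'

/-- Number of changed values in going from `D` to `D'`. -/
noncomputable def numChanges {T A U : Type*} (D D' : T → A → U) : ℕ :=
  Nat.card {p : T × A // D p.1 p.2 ≠ D' p.1 p.2}

/-- `D'` is a minimally resolved instance (MRI) of `D` wrt `M`. -/
def IsMRI {T A U : Type*} (sim : A → A → U → U → Prop)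
    (M : Finset (MD A)) (D D' : T → A → U) : Prop :=
  ResolvedInstance sim M D D' ∧
  ∀ D'' : T → A → U, ResolvedInstance sim M D D'' →
    numChanges D D' ≤ numChanges D D''

/-- The edge relation of the similarity graph `G_D` on the vertex set `T × A`. -/
def SimEdge {T A U : Type*} (sim : A → A → U → U → Prop)
    (M : Finset (MD A)) (D : T → A → U) (p q : T × A) : Prop :=
  ∃ m ∈ M, (simPairs sim m.L D p.1 q.1 ∧ (p.2, q.2) ∈ m.R) ∨
           (simPairs sim m.L D q.1 p.1 ∧ (q.2, p.2) ∈ m.R)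

section

variable {T A U : Type*} {sim : A → A → U → U → Prop} {M : Finset (MD A)} {D : T → A → U}
  {p q : T × A}

theorem SimEdge.symm (h : SimEdge sim M D p q) : SimEdge sim M D q p := by
  obtain ⟨m, hm, hpq⟩ := h
  exact ⟨m, hm, hpq.symm⟩

theorem SimEdge.modifiable_of_ne (h : SimEdge sim M D p q) (hne : D p.1 p.2 ≠ D q.1 q.2) :
    Modifiable sim M D p.1 p.2 := by
  obtain ⟨m, hm, ⟨hsim, hR⟩ | ⟨hsim, hR⟩⟩ := h
  · exact .left_ne hm hR hsim hne
  · exact .right_ne hm hR hsim hne.symm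

theorem Modifiable.of_simEdge (hq : Modifiable sim M D q.1 q.2) (h : SimEdge sim M D p q) :
    Modifiable sim M D p.1 p.2 := by
  obtain ⟨m, hm, ⟨hsim, hR⟩ | ⟨hsim, hR⟩⟩ := h
  · exact .left_mod hm hR hsim hq
  · exact .right_mod hm hR hsim hq

theorem SimEdge.modifiable_iff (h : SimEdge sim M D p q) :
    Modifiable sim M D p.1 p.2 ↔ Modifiable sim M D q.1 q.2 :=
  ⟨fun hp => hp.of_simEdge h.symm, fun hq => hq.of_simEdge h⟩

theorem modifiable_iff_of_eqvGen_simEdge (h : Relation.EqvGen (SimEdge sim M D) p q) :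
    Modifiable sim M D p.1 p.2 ↔ Modifiable sim M D q.1 q.2 :=
  have hle : Relation.EqvGen.setoid (SimEdge sim M D) ≤
      Setoid.ker fun v : T × A => Modifiable sim M D v.1 v.2 :=
    Setoid.eqvGen_le fun _ _ hedge => propext hedge.modifiable_iff
  iff_of_eq (hle h)

theorem modifiable_of_broken_component_general {v : T × A} (hedge : SimEdge sim M D p q)
    (hne : D p.1 p.2 ≠ D q.1 q.2) (hconn : Relation.EqvGen (SimEdge sim M D) v p) :
    Modifiable sim M D v.1 v.2 :=
  (modifiable_iff_of_eqvGen_simEdge hconn).2 (hedge.modifiable_of_ne hne)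

end

/-- Every vertex of a broken connected component of the similarity graph `G_D`
is modifiable in `D`. -/
theorem modifiable_of_broken_component {T A U : Type*} [Fintype T] [Fintype A]
    (sim : A → A → U → U → Prop)
    (hsym : ∀ (a b : A) (x y : U), sim a b x y → sim b a y x)
    (hsub : ∀ (a b : A) (x y : U), x = y → sim a b x y)
    (M : Finset (MD A)) (D : T → A → U)
    (s t : T) (a b : A)
    (hedge : SimEdge sim M D (s, a) (t, b))
    (hne : D s a ≠ D t b)
    (u : T) (c : A)
    (hconn : Relation.EqvGen (SimEdge sim M D) (u, c) (s, a)) :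
    Modifiable sim M D u c :=
  modifiable_of_broken_component_general hedge hne hconn
end

section
/- Let M be a non-interacting finite set of MDs and suppose D' changes only modifiable values of D (D' t a = D t a whenever (t,a) is not modifiable in D with respect to M). Then D' is a resolved instance of D with respect to M if and only if TS((t₁,a),(t₂,b)) implies D' t₁ a = D' t₂ b for all (t₁,a),(t₂,b) ∈ T × A, where TS is the equivalence relation generated by the union of the tuple-attribute relations ≈'_m for m ∈ M. -/
/-- A set of MDs is non-interacting if no attribute occurring to the right of
the arrow of one MD occurs to the left of the arrow of another. -/
def NonInteracting {A : Type*} (M : Finset (MD A)) : Prop :=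
  ∀ m₁ ∈ M, ∀ m₂ ∈ M, ∀ p ∈ m₁.R, ∀ q ∈ m₂.L,
    p.1 ≠ q.1 ∧ p.1 ≠ q.2 ∧ p.2 ≠ q.1 ∧ p.2 ≠ q.2

/-- `TSrel sim M D` : the equivalence relation on tuple-attribute pairs
generated by the union of the relations `≈'_m`, `m ∈ M`. -/
def TSrel {T A U : Type*} (sim : A → A → U → U → Prop)
    (M : Finset (MD A)) (D : T → A → U) : T × A → T × A → Prop :=
  Relation.EqvGen
    (fun p q : T × A => ∃ m ∈ M, simPairs sim m.L D p.1 q.1 ∧ (p.2, q.2) ∈ m.R)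

/-! A non-interacting `M` never modifies an attribute on which a similarity condition depends, so
a step `(D, D') ⊨ M` leaves all similarity conditions as they were. The values to be matched in `D'`
are then already equal, nothing is modifiable in `D'`, and every further step is trivial: one step
reaches a resolved instance, and its matching condition says that `D'` is constant along the
generators of `TS`. -/

section

variable {T A U : Type*} {sim : A → A → U → U → Prop} {M : Finset (MD A)} {D D' : T → A → U}

theorem Modifiable.exists_mem_R {t : T} {c : A} (h : Modifiable sim M D t c) :
    ∃ m ∈ M, ∃ p ∈ m.R, p.1 = c ∨ p.2 = c := by
  cases h with
  | left_ne hm hR | left_mod hm hR => exact ⟨_, hm, _, hR, .inl rfl⟩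
  | right_ne hm hR | right_mod hm hR => exact ⟨_, hm, _, hR, .inr rfl⟩

theorem NonInteracting.not_modifiable_of_mem_L (hM : NonInteracting M) {m : MD A} (hm : m ∈ M)
    {q : A × A} (hq : q ∈ m.L) {c : A} (hc : c = q.1 ∨ c = q.2) (t : T) :
    ¬ Modifiable sim M D t c := by
  intro hmod
  obtain ⟨m', hm', p, hp, hpc⟩ := hmod.exists_mem_R
  have hdisjoint := hM m' hm' m hm p hp q hq
  grind

theorem Sat.simPairs_iff (hM : NonInteracting M) (h : Sat sim M D D') {m : MD A} (hm : m ∈ M)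
    (t₁ t₂ : T) : simPairs sim m.L D' t₁ t₂ ↔ simPairs sim m.L D t₁ t₂ := by
  refine forall₂_congr fun q hq => ?_
  rw [h.2 _ _ (hM.not_modifiable_of_mem_L hm hq (.inl rfl) t₁),
    h.2 _ _ (hM.not_modifiable_of_mem_L hm hq (.inr rfl) t₂)]

theorem Sat.sat_self (hM : NonInteracting M) (h : Sat sim M D D') : Sat sim M D' D' :=
  ⟨fun m hm t₁ t₂ hsim => h.1 m hm t₁ t₂ ((h.simPairs_iff hM hm t₁ t₂).1 hsim), fun _ _ _ => rfl⟩

theorem Sat.not_modifiable (h : Sat sim M D D) (t : T) (c : A) : ¬ Modifiable sim M D t c := by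
  intro hmod
  induction hmod with
  | left_ne hm hR hsim hne | right_ne hm hR hsim hne => exact hne (h.1 _ hm _ _ hsim _ hR)
  | left_mod _ _ _ _ ih | right_mod _ _ _ _ ih => exact ih

theorem Sat.eq_of_sat_self (h : Sat sim M D D) (h' : Sat sim M D D') : D' = D := by
  ext t c
  exact h'.2 t c (h.not_modifiable t c)

theorem NonInteracting.isTrans_sat (hM : NonInteracting M) :
    IsTrans (T → A → U) (Sat sim M) where
  trans _ _ _ h₁ h₂ := (h₁.sat_self hM).eq_of_sat_self h₂ ▸ h₁

theorem NonInteracting.resolvedInstance_iff_sat (hM : NonInteracting M) :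
    ResolvedInstance sim M D D' ↔ Sat sim M D D' := by
  constructor
  · rintro ⟨L, hchain, -⟩
    have := hM.isTrans_sat (T := T) (sim := sim)
    exact hchain.rel_cons (List.mem_append_right L (List.mem_singleton_self D'))
  · exact fun h => ⟨[], .cons_cons h (.singleton D'), h.sat_self hM⟩

theorem forall_TSrel_imp_eq_iff :
    (∀ p q : T × A, TSrel sim M D p q → D' p.1 p.2 = D' q.1 q.2) ↔
      ∀ m ∈ M, ∀ t₁ t₂ : T, simPairs sim m.L D t₁ t₂ → ∀ p ∈ m.R, D' t₁ p.1 = D' t₂ p.2 := by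
  constructor
  · intro h m hm t₁ t₂ hsim p hp
    exact h (t₁, p.1) (t₂, p.2) (.rel _ _ ⟨m, hm, hsim, hp⟩)
  · intro h p q hpq
    refine Setoid.eqvGen_le (s := Setoid.ker fun x : T × A => D' x.1 x.2) ?_ hpq
    rintro x y ⟨m, hm, hsim, hR⟩
    exact h m hm x.1 y.1 hsim (x.2, y.2) hR

theorem resolved_iff_constant_on_TS_general (hM : NonInteracting M) :
    ResolvedInstance sim M D D' ↔
      (∀ p q : T × A, TSrel sim M D p q → D' p.1 p.2 = D' q.1 q.2) ∧
        ∀ (t : T) (a : A), ¬ Modifiable sim M D t a → D' t a = D t a := by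
  rw [hM.resolvedInstance_iff_sat, forall_TSrel_imp_eq_iff, Sat]

end

/-- Lemma A.2: for a non-interacting set `M` of MDs and `D'` changing only
modifiable values, `D'` is a resolved instance of `D` iff `D'` is constant on
every equivalence class of `TS`. -/
theorem resolved_iff_constant_on_TS {T A U : Type*} [Fintype T] [Fintype A]
    (sim : A → A → U → U → Prop)
    (hsym : ∀ (a b : A) (x y : U), sim a b x y → sim b a y x)
    (hsub : ∀ (a b : A) (x y : U), x = y → sim a b x y)
    (M : Finset (MD A)) (hni : NonInteracting M)
    (D D' : T → A → U)
    (hmod : ∀ (t : T) (a : A), ¬ Modifiable sim M D t a → D' t a = D t a) :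
    ResolvedInstance sim M D D' ↔
      ∀ p q : T × A, TSrel sim M D p q → D' p.1 p.2 = D' q.1 q.2 :=
  (resolved_iff_constant_on_TS_general hni).trans (and_iff_left hmod)
end

section
/- For every database instance D : T → A → U and every finite set M of matching dependencies, the set of minimally resolved instances of D with respect to M is nonempty. -/
/-!
Fix a value `u` and, at each step, write `u` into every modifiable position. The positions matched
by an MD are either all modifiable or already carry equal values, so each step is admissible. If the
instance is not yet stable, two positions with different values are modifiable, so at least one of
them differs from `u` and is overwritten. Only attributes on the right of some MD can ever change,
and there are finitely many such positions, so the process reaches a stable instance. A resolved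
instance with the fewest changes then exists because `ℕ` is well-ordered.
-/

section MatchedAttributes

variable {T A U : Type*} {sim : A → A → U → U → Prop} {M : Finset (MD A)} {D D' : T → A → U}

/-- The attributes occurring in a right-hand side `R` of some MD in `M`; only their values can ever
be changed by enforcing `M`. -/
def matchedAttrs (M : Finset (MD A)) : Set A :=
  {c | ∃ m ∈ M, ∃ p ∈ m.R, p.1 = c ∨ p.2 = c}

theorem finite_matchedAttrs (M : Finset (MD A)) : (matchedAttrs M).Finite := by
  have hfin : (⋃ m ∈ M, ⋃ p ∈ m.R, ({p.1, p.2} : Set A)).Finite :=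
    M.finite_toSet.biUnion fun m _ => m.R.finite_toSet.biUnion fun _ _ => Set.toFinite _
  refine hfin.subset ?_
  rintro c ⟨m, hm, p, hp, hc⟩
  simp only [Set.mem_iUnion]
  exact ⟨m, hm, p, hp, hc.imp Eq.symm Eq.symm⟩

theorem finite_setOf_snd_mem_matchedAttrs [Finite T] (M : Finset (MD A)) :
    {p : T × A | p.2 ∈ matchedAttrs M}.Finite :=
  (Set.finite_univ.prod (finite_matchedAttrs M)).subset fun _ hp => ⟨trivial, hp⟩

theorem Modifiable.mem_matchedAttrs {t : T} {c : A} (h : Modifiable sim M D t c) :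
    c ∈ matchedAttrs M := by
  cases h with
  | left_ne hm hp | left_mod hm hp => exact ⟨_, hm, _, hp, .inl rfl⟩
  | right_ne hm hp | right_mod hm hp => exact ⟨_, hm, _, hp, .inr rfl⟩

theorem Sat.eq_of_notMem_matchedAttrs (h : Sat sim M D D') {c : A} (hc : c ∉ matchedAttrs M)
    (t : T) : D' t c = D t c :=
  h.2 t c fun hmod => hc hmod.mem_matchedAttrs

end MatchedAttributes

section ResolvedInstances

variable {T A U : Type*} {sim : A → A → U → U → Prop} {M : Finset (MD A)} {D D' : T → A → U}

theorem resolvedInstance_iff_reflTransGen :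
    ResolvedInstance sim M D D' ↔ Relation.ReflTransGen (Sat sim M) D D' ∧ Sat sim M D' D' := by
  constructor
  · rintro ⟨L, hchain, hstable⟩
    exact ⟨List.relationReflTransGen_of_exists_isChain_cons _ hchain (by simp), hstable⟩
  · rintro ⟨hreach, hstable⟩
    obtain ⟨L, hchain, hlast⟩ := List.exists_isChain_cons_of_relationReflTransGen hreach
    -- The chain found already ends in `D'`; stability allows `D'` to be appended once more.
    refine ⟨L, List.isChain_append (l₁ := D :: L) |>.2 ⟨hchain, .singleton D', ?_⟩, hstable⟩
    simpa [List.getLast?_eq_some_getLast, hlast] using hstable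

theorem Sat.resolvedInstance_self (h : Sat sim M D D) : ResolvedInstance sim M D D :=
  resolvedInstance_iff_reflTransGen.2 ⟨.refl, h⟩

theorem Sat.trans_resolvedInstance {D₁ : T → A → U} (h : Sat sim M D D₁)
    (h' : ResolvedInstance sim M D₁ D') : ResolvedInstance sim M D D' :=
  let ⟨hreach, hstable⟩ := resolvedInstance_iff_reflTransGen.1 h'
  resolvedInstance_iff_reflTransGen.2 ⟨.head h hreach, hstable⟩

theorem ResolvedInstance.eq_of_notMem_matchedAttrs (h : ResolvedInstance sim M D D') {c : A}
    (hc : c ∉ matchedAttrs M) (t : T) : D' t c = D t c := by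
  obtain ⟨hreach, -⟩ := resolvedInstance_iff_reflTransGen.1 h
  clear h
  induction hreach with
  | refl => rfl
  | tail _ hstep ih => exact (hstep.eq_of_notMem_matchedAttrs hc t).trans ih

theorem ResolvedInstance.finite_changes [Finite T] (h : ResolvedInstance sim M D D') :
    {p : T × A | D p.1 p.2 ≠ D' p.1 p.2}.Finite :=
  (finite_setOf_snd_mem_matchedAttrs M).subset fun p hne =>
    not_not.1 fun hp => hne (h.eq_of_notMem_matchedAttrs hp p.1).symm

end ResolvedInstances

section Overwrite

variable {T A U : Type*} {sim : A → A → U → U → Prop} {M : Finset (MD A)} {D : T → A → U}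

theorem modifiable_iff_of_simPairs {m : MD A} {t s : T} {c e : A} (hm : m ∈ M)
    (hsim : simPairs sim m.L D t s) (hce : (c, e) ∈ m.R) :
    Modifiable sim M D t c ↔ Modifiable sim M D s e :=
  ⟨.right_mod hm hce hsim, .left_mod hm hce hsim⟩

theorem exists_modifiable_ne_of_not_sat_self (h : ¬ Sat sim M D D) (u : U) :
    ∃ t c, Modifiable sim M D t c ∧ D t c ≠ u := by
  by_contra! hall
  refine h ⟨fun m hm t s hsim ⟨c, e⟩ hce => ?_, fun _ _ _ => rfl⟩
  by_contra hne
  have ht : D t c = u := hall t c (.left_ne hm hce hsim hne)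
  have hs : D s e = u := hall s e (.right_ne hm hce hsim hne)
  exact hne (ht.trans hs.symm)

open Classical in
/-- The instance obtained from `D` by writing `u` into every modifiable position: the update step
of the resolution process. -/
noncomputable def overwriteModifiable (sim : A → A → U → U → Prop) (M : Finset (MD A)) (u : U)
    (D : T → A → U) : T → A → U :=
  fun t c => if Modifiable sim M D t c then u else D t c

theorem overwriteModifiable_of_modifiable {t : T} {c : A} (h : Modifiable sim M D t c) (u : U) :
    overwriteModifiable sim M u D t c = u :=
  if_pos h

theorem overwriteModifiable_of_not_modifiable {t : T} {c : A} (h : ¬ Modifiable sim M D t c)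
    (u : U) : overwriteModifiable sim M u D t c = D t c :=
  if_neg h

theorem sat_overwriteModifiable (sim : A → A → U → U → Prop) (M : Finset (MD A)) (u : U)
    (D : T → A → U) : Sat sim M D (overwriteModifiable sim M u D) := by
  refine ⟨fun m hm t s hsim ⟨c, e⟩ hce => ?_,
    fun _ _ h => overwriteModifiable_of_not_modifiable h u⟩
  have hiff := modifiable_iff_of_simPairs hm hsim hce
  by_cases ht : Modifiable sim M D t c
  · rw [overwriteModifiable_of_modifiable ht, overwriteModifiable_of_modifiable (hiff.1 ht)]
  · have heq : D t c = D s e := by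
      by_contra hne
      exact ht (.left_ne hm hce hsim hne)
    rw [overwriteModifiable_of_not_modifiable ht,
      overwriteModifiable_of_not_modifiable (mt hiff.2 ht), heq]

/-- The positions with a matched attribute whose value in `D` is not `u`; their number is the
termination measure of the resolution process. -/
def matchedNe (M : Finset (MD A)) (u : U) (D : T → A → U) : Set (T × A) :=
  {p | p.2 ∈ matchedAttrs M ∧ D p.1 p.2 ≠ u}

theorem matchedNe_overwriteModifiable_ssubset (h : ¬ Sat sim M D D) (u : U) :
    matchedNe M u (overwriteModifiable sim M u D) ⊂ matchedNe M u D := by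
  obtain ⟨t, c, hmod, hne⟩ := exists_modifiable_ne_of_not_sat_self h u
  refine (Set.ssubset_iff_of_subset ?_).2 ⟨(t, c), ⟨hmod.mem_matchedAttrs, hne⟩,
    fun hmem => hmem.2 (overwriteModifiable_of_modifiable hmod u)⟩
  rintro ⟨s, e⟩ ⟨he, hse⟩
  have hmod' : ¬ Modifiable sim M D s e := fun h' => hse (overwriteModifiable_of_modifiable h' u)
  exact ⟨he, overwriteModifiable_of_not_modifiable hmod' u ▸ hse⟩

theorem exists_resolvedInstance [Finite T] (sim : A → A → U → U → Prop) (M : Finset (MD A))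
    (D : T → A → U) : ∃ D', ResolvedInstance sim M D D' := by
  obtain _ | ⟨⟨u⟩⟩ := isEmpty_or_nonempty U
  · have hstable : Sat sim M D D :=
      ⟨fun _ _ _ _ _ _ _ => Subsingleton.elim _ _, fun _ _ _ => rfl⟩
    exact ⟨D, hstable.resolvedInstance_self⟩
  induction hn : (matchedNe M u D).ncard using Nat.strong_induction_on generalizing D with
  | _ n ih =>
    by_cases hstable : Sat sim M D D
    · exact ⟨D, hstable.resolvedInstance_self⟩
    have hfin : (matchedNe M u D).Finite :=
      (finite_setOf_snd_mem_matchedAttrs M).subset fun _ hp => hp.1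
    have hlt := Set.ncard_lt_ncard (matchedNe_overwriteModifiable_ssubset hstable u) hfin
    obtain ⟨D', hD'⟩ := ih _ (hn ▸ hlt) _ rfl
    exact ⟨D', (sat_overwriteModifiable sim M u D).trans_resolvedInstance hD'⟩

end Overwrite

/-- The first conjunct ensures that `numChanges`, a `Nat.card`, never takes its junk value `0` on
an infinite set of changes when `A` is infinite. -/
theorem exists_mri_general {T A U : Type*} [Finite T] (sim : A → A → U → U → Prop)
    (M : Finset (MD A)) (D : T → A → U) :
    (∀ D', ResolvedInstance sim M D D' → {p : T × A | D p.1 p.2 ≠ D' p.1 p.2}.Finite) ∧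
      ∃ D', IsMRI sim M D D' := by
  refine ⟨fun _ hD' => hD'.finite_changes, ?_⟩
  obtain ⟨D', hmin⟩ := exists_minimalFor_of_wellFoundedLT (ResolvedInstance sim M D) (numChanges D)
    (exists_resolvedInstance sim M D)
  exact ⟨D', hmin.prop, fun _ hres => hmin.le hres⟩

/-- For every instance `D` and finite set `M` of MDs, the set of minimally
resolved instances of `D` wrt `M` is nonempty. -/
theorem exists_mri {T A U : Type*} [Fintype T] [Fintype A]
    (sim : A → A → U → U → Prop)
    (hsym : ∀ (a b : A) (x y : U), sim a b x y → sim b a y x)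
    (hsub : ∀ (a b : A) (x y : U), x = y → sim a b x y)
    (M : Finset (MD A)) (D : T → A → U) :
    ∃ D' : T → A → U, IsMRI sim M D D' :=
  (exists_mri_general sim M D).2
end

section
/- Let the attribute set be A = {α, β, γ} and let M = {m} where L(m) = {(α,α)} with a symmetric similarity relation ≈ subsuming equality and R(m) = {(β,β)}. Let T_m be the equivalence relation on T generated by the relation sim_m(D,·,·). Then for all values x, y, z ∈ U, the following are equivalent: (i) for every minimally resolved instance D' of D with respect to M there exists t ∈ T with D' t α = x, D' t β = y and D' t γ = z (i.e., (x,y,z) is a resolved answer to the query returning all tuples of the relation); (ii) there exists s ∈ T with D s α = x and D s γ = z such that for every value y'' ≠ y, the number of tuples u with T_m(s,u) and D u β = y is strictly greater than the number of tuples u with T_m(s,u) and D u β = y''. -/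
/-!
When every MD of `M` matches the single attribute `b`, and no left-hand side mentions `b`, matching
never changes the values that decide which tuples are similar. The resolved instances therefore
carry one `b`-value per class of the equivalence relation generated by the similarity in `D`.
A class with at least two `b`-values is modifiable throughout, so any `b`-value present in a class
may become its common value. The number of changes is `|T|` minus the number of tuples that keep
their `b`-value, a sum over the classes which is optimised class by class, so the minimally resolved
instances are exactly the choices of a most frequent value in each class. A strictly most frequent
value is forced; conversely a single MRI can avoid a given value in all classes where it is not
forced.
-/

section ClassCounts

variable {T U : Type*} {r : Setoid T} {f : T → U} {q : Quotient r} {v w : U}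

/-- The number of elements of the class `q` at which `f` takes the value `v`. -/
noncomputable def classCount (f : T → U) (q : Quotient r) (v : U) : ℕ :=
  Nat.card {u : T // q = ⟦u⟧ ∧ f u = v}

/-- `v` is a mode (a most frequent value) of `f` on the class `q`; ties are allowed. -/
def IsMode (f : T → U) (q : Quotient r) (v : U) : Prop :=
  ∀ w, classCount f q w ≤ classCount f q v

/-- `v` is strictly more frequent than every other value of `f` on the class `q`. -/
def IsStrictMode (f : T → U) (q : Quotient r) (v : U) : Prop :=
  ∀ w, w ≠ v → classCount f q w < classCount f q v

theorem classCount_mk (f : T → U) (s : T) (v : U) :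
    classCount f (⟦s⟧ : Quotient r) v = Nat.card {u : T // r s u ∧ f u = v} := by
  simp only [classCount, Quotient.eq]

theorem classCount_pos_iff [Finite T] :
    0 < classCount f q v ↔ ∃ u, q = ⟦u⟧ ∧ f u = v := by
  rw [classCount, Finite.card_pos_iff, nonempty_subtype]

theorem isStrictMode_mk_iff {s : T} :
    IsStrictMode f (⟦s⟧ : Quotient r) v ↔
      ∀ w, w ≠ v → Nat.card {u : T // r s u ∧ f u = w} < Nat.card {u : T // r s u ∧ f u = v} := by
  simp only [IsStrictMode, classCount_mk]

theorem IsStrictMode.eq_of_isMode (hv : IsStrictMode f q v) (hw : IsMode f q w) : w = v := by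
  by_contra hne
  exact (hv w hne).not_ge (hw v)

theorem IsMode.exists_mem [Finite T] (h : IsMode f q v) : ∃ u, q = ⟦u⟧ ∧ f u = v := by
  obtain ⟨s, rfl⟩ := Quotient.exists_rep q
  exact classCount_pos_iff.1 <| (classCount_pos_iff.2 ⟨s, rfl, rfl⟩).trans_le (h (f s))

theorem exists_isMode [Finite T] (f : T → U) (q : Quotient r) : ∃ v, IsMode f q v := by
  have : Nonempty T := ⟨q.out⟩
  obtain ⟨s, hs⟩ := Finite.exists_max fun t => classCount f q (f t)
  refine ⟨f s, fun w => ?_⟩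
  rcases Nat.eq_zero_or_pos (classCount f q w) with h0 | hpos
  · exact h0 ▸ Nat.zero_le _
  · obtain ⟨u, -, rfl⟩ := classCount_pos_iff.1 hpos
    exact hs u

theorem exists_isMode_imp_isStrictMode [Finite T] (f : T → U) (q : Quotient r) (v : U) :
    ∃ w, IsMode f q w ∧ (w = v → IsStrictMode f q v) := by
  obtain ⟨m, hm⟩ := exists_isMode f q
  by_cases hv : IsStrictMode f q v
  · exact ⟨m, hm, fun _ => hv⟩
  · rcases eq_or_ne m v with rfl | hmv
    · simp only [IsStrictMode, not_forall, not_lt] at hv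
      obtain ⟨w, hwm, hle⟩ := hv
      exact ⟨w, fun x => (hm x).trans hle, fun h => absurd h hwm⟩
    · exact ⟨m, hm, fun h => absurd h hmv⟩

theorem card_eq_sum_classCount [Finite T] [Fintype (Quotient r)] (f : T → U)
    (g : Quotient r → U) :
    Nat.card {t : T // f t = g ⟦t⟧} = ∑ q, classCount f q (g q) := by
  unfold classCount
  rw [← Nat.card_sigma]
  refine Nat.card_congr ⟨fun t => ⟨⟦t⟧, t, rfl, t.2⟩, fun x => ⟨x.2, ?_⟩, fun _ => rfl, ?_⟩
  · rw [x.2.2.2, ← x.2.2.1]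
  · rintro ⟨_, u, rfl, _⟩
    rfl

end ClassCounts

section Instances

variable {T A U : Type*} {sim : A → A → U → U → Prop} {M : Finset (MD A)}
  {D D' : T → A → U} {a b : A} {t u : T}

/-- The equivalence relation on tuples generated by similarity under some MD of `M`, the relation
`T_m` when `M = {m}`. -/
def matchSetoid (sim : A → A → U → U → Prop) (M : Finset (MD A)) (D : T → A → U) : Setoid T :=
  Relation.EqvGen.setoid fun t u => ∃ m ∈ M, simPairs sim m.L D t u

/-- The instance `D` with the `b`-values of each class `q` of `r` replaced by `g q`. -/
def setOnClasses [DecidableEq A] {r : Setoid T} (D : T → A → U) (b : A) (g : Quotient r → U) :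
    T → A → U :=
  fun t => Function.update (D t) b (g ⟦t⟧)

theorem setOnClasses_apply_of_ne [DecidableEq A] {r : Setoid T} (D : T → A → U)
    (g : Quotient r → U) (t : T) (ha : a ≠ b) : setOnClasses D b g t a = D t a :=
  Function.update_of_ne ha _ _

theorem setOnClasses_apply_self [DecidableEq A] {r : Setoid T} (D : T → A → U) (b : A)
    (g : Quotient r → U) (t : T) : setOnClasses D b g t b = g ⟦t⟧ :=
  Function.update_self ..

theorem simPairs_congr {L : Finset (A × A)} (hL : ∀ p ∈ L, p.1 ≠ b ∧ p.2 ≠ b)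
    (h : ∀ t, ∀ a ≠ b, D' t a = D t a) : simPairs sim L D' t u ↔ simPairs sim L D t u :=
  forall₂_congr fun p hp => by rw [h t _ (hL p hp).1, h u _ (hL p hp).2]

theorem Modifiable.attr_eq (hR : ∀ m ∈ M, m.R = {(b, b)}) (h : Modifiable sim M D t a) :
    a = b := by
  cases h <;> simp_all

theorem modifiable_iff_of_rel (hR : ∀ m ∈ M, m.R = {(b, b)}) (h : matchSetoid sim M D t u) :
    Modifiable sim M D t b ↔ Modifiable sim M D u b := by
  refine iff_of_eq <| Setoid.eqvGen_le (s := Setoid.ker fun t => Modifiable sim M D t b) ?_ h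
  rintro t u ⟨m, hm, hsim⟩
  have hb : (b, b) ∈ m.R := by simp [hR m hm]
  exact propext ⟨.right_mod hm hb hsim, .left_mod hm hb hsim⟩

theorem modifiable_of_rel_of_ne (hR : ∀ m ∈ M, m.R = {(b, b)}) (h : matchSetoid sim M D t u)
    (hne : D t b ≠ D u b) : Modifiable sim M D t b := by
  induction h with
  | rel t u h =>
    obtain ⟨m, hm, hsim⟩ := h
    exact .left_ne hm (by simp [hR m hm]) hsim hne
  | refl t => exact absurd rfl hne
  | symm t u h ih => exact (modifiable_iff_of_rel hR h).1 (ih hne.symm)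
  | trans t v u h _ ih₁ ih₂ =>
    by_cases htv : D t b = D v b
    · exact (modifiable_iff_of_rel hR h).2 (ih₂ (htv ▸ hne))
    · exact ih₁ htv

theorem Sat.apply_eq_of_ne (hR : ∀ m ∈ M, m.R = {(b, b)}) (h : Sat sim M D D') (t : T)
    (ha : a ≠ b) : D' t a = D t a :=
  h.2 t a fun hmod => ha (hmod.attr_eq hR)

theorem ResolvedInstance.apply_eq_of_ne (hR : ∀ m ∈ M, m.R = {(b, b)})
    (h : ResolvedInstance sim M D D') (t : T) (ha : a ≠ b) : D' t a = D t a := by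
  obtain ⟨l, hl, -⟩ := h
  have hreach : Relation.ReflTransGen (Sat sim M) D D' :=
    List.relationReflTransGen_of_exists_isChain_cons _ hl (by simp)
  clear hl
  induction hreach with
  | refl => rfl
  | tail _ hsat ih => exact (hsat.apply_eq_of_ne hR t ha).trans ih

theorem ResolvedInstance.apply_eq_of_rel (hR : ∀ m ∈ M, m.R = {(b, b)})
    (hL : ∀ m ∈ M, ∀ p ∈ m.L, p.1 ≠ b ∧ p.2 ≠ b) (h : ResolvedInstance sim M D D')
    (htu : matchSetoid sim M D t u) : D' t b = D' u b := by
  refine Setoid.eqvGen_le (s := Setoid.ker fun t => D' t b) ?_ htu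
  rintro t u ⟨m, hm, hsim⟩
  have hsim' := (simPairs_congr (hL m hm) fun t _ ha => h.apply_eq_of_ne hR t ha).2 hsim
  obtain ⟨-, -, hstable⟩ := h
  exact hstable.1 m hm t u hsim' (b, b) (by simp [hR m hm])

theorem ResolvedInstance.exists_eq_setOnClasses [DecidableEq A] (hR : ∀ m ∈ M, m.R = {(b, b)})
    (hL : ∀ m ∈ M, ∀ p ∈ m.L, p.1 ≠ b ∧ p.2 ≠ b) (h : ResolvedInstance sim M D D') :
    ∃ g : Quotient (matchSetoid sim M D) → U, D' = setOnClasses D b g := by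
  refine ⟨Quotient.lift (D' · b) fun _ _ => h.apply_eq_of_rel hR hL, funext fun t => ?_⟩
  exact Function.eq_update_iff.2 ⟨rfl, fun a ha => h.apply_eq_of_ne hR t ha⟩

theorem sat_setOnClasses [DecidableEq A] (hR : ∀ m ∈ M, m.R = {(b, b)})
    {g : Quotient (matchSetoid sim M D) → U} (hg : ∀ q, ∃ u, q = ⟦u⟧ ∧ D u b = g q) :
    Sat sim M D (setOnClasses D b g) := by
  refine ⟨fun m hm t u hsim p hp => ?_, fun t a hmod => ?_⟩
  · obtain rfl : p = (b, b) := by simpa [hR m hm] using hp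
    have htu : (⟦t⟧ : Quotient (matchSetoid sim M D)) = ⟦u⟧ :=
      Quotient.sound (.rel t u ⟨m, hm, hsim⟩)
    simp only [setOnClasses_apply_self, htu]
  · by_cases ha : a = b
    · subst ha
      obtain ⟨u, htu, hu⟩ := hg ⟦t⟧
      rw [setOnClasses_apply_self, ← hu]
      by_contra hne
      exact hmod (modifiable_of_rel_of_ne hR (Quotient.exact htu) (Ne.symm hne))
    · exact setOnClasses_apply_of_ne D g t ha

theorem resolvedInstance_setOnClasses [DecidableEq A] (hR : ∀ m ∈ M, m.R = {(b, b)})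
    (hL : ∀ m ∈ M, ∀ p ∈ m.L, p.1 ≠ b ∧ p.2 ≠ b)
    {g : Quotient (matchSetoid sim M D) → U} (hg : ∀ q, ∃ u, q = ⟦u⟧ ∧ D u b = g q) :
    ResolvedInstance sim M D (setOnClasses D b g) := by
  have hsat := sat_setOnClasses hR hg
  refine ⟨[], List.isChain_pair.2 hsat, fun m hm t u hsim => ?_, fun _ _ _ => rfl⟩
  exact hsat.1 m hm t u <|
    (simPairs_congr (hL m hm) fun t _ => setOnClasses_apply_of_ne D g t).1 hsim

theorem numChanges_eq_card (h : ∀ t, ∀ a ≠ b, D' t a = D t a) :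
    numChanges D D' = Nat.card {t : T // D t b ≠ D' t b} := by
  symm
  refine Nat.card_eq_of_bijective (fun t => ⟨(t, b), t.2⟩) ⟨fun t u htu => ?_, ?_⟩
  · simpa [Subtype.ext_iff] using htu
  · rintro ⟨⟨t, a⟩, hta⟩
    obtain rfl : a = b := by
      by_contra ha
      exact hta (h t a ha).symm
    exact ⟨⟨t, hta⟩, rfl⟩

theorem sum_classCount_add_numChanges [DecidableEq A] [Finite T] {r : Setoid T}
    [Fintype (Quotient r)] (D : T → A → U) (b : A) (g : Quotient r → U) :
    ∑ q, classCount (D · b) q (g q) + numChanges D (setOnClasses D b g) = Nat.card T := by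
  classical
  rw [numChanges_eq_card fun t _ => setOnClasses_apply_of_ne D g t, ← card_eq_sum_classCount]
  simp only [setOnClasses_apply_self]
  rw [← Nat.card_sum, Nat.card_congr (Equiv.sumCompl fun t => D t b = g ⟦t⟧)]

theorem numChanges_setOnClasses_le [DecidableEq A] [Finite T] {r : Setoid T}
    {g : Quotient r → U} (hg : ∀ q, IsMode (D · b) q (g q)) (k : Quotient r → U) :
    numChanges D (setOnClasses D b g) ≤ numChanges D (setOnClasses D b k) := by
  have := Fintype.ofFinite (Quotient r)
  have hsum := Finset.sum_le_sum fun q (_ : q ∈ Finset.univ) => hg q (k q)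
  have hg_total := sum_classCount_add_numChanges D b g
  have hk_total := sum_classCount_add_numChanges D b k
  lia

theorem isMode_of_numChanges_setOnClasses_le [DecidableEq A] [Finite T] {r : Setoid T}
    {g k : Quotient r → U} (hk : ∀ q, IsMode (D · b) q (k q))
    (hle : numChanges D (setOnClasses D b g) ≤ numChanges D (setOnClasses D b k))
    (q : Quotient r) : IsMode (D · b) q (g q) := by
  have := Fintype.ofFinite (Quotient r)
  have hpt : ∀ q ∈ Finset.univ, classCount (D · b) q (g q) ≤ classCount (D · b) q (k q) :=
    fun q _ => hk q (g q)
  have hg_total := sum_classCount_add_numChanges D b g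
  have hk_total := sum_classCount_add_numChanges D b k
  have hsum := (Finset.sum_le_sum hpt).antisymm (by lia)
  have hq := (Finset.sum_eq_sum_iff_of_le hpt).1 hsum q (Finset.mem_univ q)
  exact fun w => (hk q w).trans_eq hq.symm

theorem isMRI_iff_exists_isMode [DecidableEq A] [Finite T] (hR : ∀ m ∈ M, m.R = {(b, b)})
    (hL : ∀ m ∈ M, ∀ p ∈ m.L, p.1 ≠ b ∧ p.2 ≠ b) :
    IsMRI sim M D D' ↔ ∃ g : Quotient (matchSetoid sim M D) → U,
      (∀ q, IsMode (D · b) q (g q)) ∧ D' = setOnClasses D b g := by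
  constructor
  · rintro ⟨hres, hmin⟩
    obtain ⟨g, rfl⟩ := hres.exists_eq_setOnClasses hR hL
    choose k hk using exists_isMode (r := matchSetoid sim M D) (D · b)
    have hle := hmin _ (resolvedInstance_setOnClasses hR hL fun q => (hk q).exists_mem)
    exact ⟨g, isMode_of_numChanges_setOnClasses_le hk hle, rfl⟩
  · rintro ⟨g, hg, rfl⟩
    refine ⟨resolvedInstance_setOnClasses hR hL fun q => (hg q).exists_mem, fun D'' hres => ?_⟩
    obtain ⟨k, rfl⟩ := hres.exists_eq_setOnClasses hR hL
    exact numChanges_setOnClasses_le hg k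

end Instances

theorem resolved_answer_iff_count_general {T A U : Type*} [Finite T]
    (sim : A → A → U → U → Prop) {M : Finset (MD A)} {b : A} (hR : ∀ m ∈ M, m.R = {(b, b)})
    (hL : ∀ m ∈ M, ∀ p ∈ m.L, p.1 ≠ b ∧ p.2 ≠ b) (D : T → A → U) (x : A → U) :
    (∀ D' : T → A → U, IsMRI sim M D D' → ∃ t, D' t = x) ↔
      ∃ s, (∀ a ≠ b, D s a = x a) ∧ ∀ y, y ≠ x b →
        Nat.card {u : T // Relation.EqvGen
          (fun t₁ t₂ => ∃ m ∈ M, simPairs sim m.L D t₁ t₂) s u ∧ D u b = y} <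
        Nat.card {u : T // Relation.EqvGen
          (fun t₁ t₂ => ∃ m ∈ M, simPairs sim m.L D t₁ t₂) s u ∧ D u b = x b} := by
  classical
  simp only [isMRI_iff_exists_isMode hR hL]
  constructor
  · intro h
    choose g hmode hstrict using fun q : Quotient (matchSetoid sim M D) =>
      exists_isMode_imp_isStrictMode (D · b) q (x b)
    obtain ⟨t, ht⟩ := h _ ⟨g, hmode, rfl⟩
    obtain ⟨hb, hne⟩ := Function.update_eq_iff.1 ht
    exact ⟨t, hne, isStrictMode_mk_iff.1 (hstrict _ hb)⟩
  · rintro ⟨s, hs, hcount⟩ _ ⟨g, hmode, rfl⟩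
    have hstrict : IsStrictMode (D · b) (⟦s⟧ : Quotient (matchSetoid sim M D)) (x b) :=
      isStrictMode_mk_iff.2 hcount
    exact ⟨s, Function.update_eq_iff.2 ⟨hstrict.eq_of_isMode (hmode _), hs⟩⟩

/-- Correctness of the rewriting of Example 4.5: `(x, y, z)` is a resolved
answer to the query returning all tuples of `R[α, β, γ]` wrt the MD
`R[α] ≈ R[α] → R[β] ≐ R[β]` iff there is a tuple `s` with `D s α = x`,
`D s γ = z` such that `y` is strictly most frequent as a `β`-value in the
`T_m`-equivalence class of `s`. -/
theorem resolved_answer_iff_count {T U : Type*} [Fintype T]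
    (sim : Fin 3 → Fin 3 → U → U → Prop)
    (hsym : ∀ (a b : Fin 3) (x y : U), sim a b x y → sim b a y x)
    (hsub : ∀ (a b : Fin 3) (x y : U), x = y → sim a b x y)
    (D : T → Fin 3 → U) (x y z : U) :
    (∀ D' : T → Fin 3 → U,
        IsMRI sim
          ({⟨({((0 : Fin 3), (0 : Fin 3))} : Finset (Fin 3 × Fin 3)),
             ({((1 : Fin 3), (1 : Fin 3))} : Finset (Fin 3 × Fin 3))⟩} :
            Finset (MD (Fin 3))) D D' →
        ∃ t : T, D' t 0 = x ∧ D' t 1 = y ∧ D' t 2 = z) ↔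
      (∃ s : T, D s 0 = x ∧ D s 2 = z ∧
        ∀ y'' : U, y'' ≠ y →
          Nat.card {u : T //
            Relation.EqvGen (fun t₁ t₂ : T =>
              simPairs sim ({((0 : Fin 3), (0 : Fin 3))} : Finset (Fin 3 × Fin 3)) D t₁ t₂)
              s u ∧ D u 1 = y''} <
          Nat.card {u : T //
            Relation.EqvGen (fun t₁ t₂ : T =>
              simPairs sim ({((0 : Fin 3), (0 : Fin 3))} : Finset (Fin 3 × Fin 3)) D t₁ t₂)
              s u ∧ D u 1 = y}) := by
  simpa [funext_iff, Fin.forall_fin_succ, and_assoc] using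
    resolved_answer_iff_count_general (b := 1) sim (M := {⟨{(0, 0)}, {(1, 1)}⟩})
      (by simp) (by simp) D ![x, y, z]
end
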